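/- arXiv:2502.11640 — 5 statements merged into one kernel-verified Lean document; each statement's English description precedes it below -/
import Mathlib

section
/- Let α > 1 and let V be a real normed space whose topological dual V* is strictly convex, so that the generalized duality mapping is single-valued; denote by j(u) the unique element of J(u). Then j is demicontinuous from the norm topology of V to the weak-* topology of V*: if (u_n) is a sequence in V with ‖u_n − u‖_V → 0, then j(u_n) converges to j(u) in the weak-* topology σ(V*, V). -/
open NormedSpace Filter Topology

/-- The generalized duality mapping with exponent `α` on a real normed space `V`:
`J(u) = {v ∈ V* | ⟨v,u⟩ = ‖u‖^α = ‖v‖^{α/(α-1)}}`. -/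
def genJ (α : ℝ) (V : Type*) [NormedAddCommGroup V] [NormedSpace ℝ V] (u : V) :
    Set (StrongDual ℝ V) :=
  {v : StrongDual ℝ V | v u = ‖u‖ ^ α ∧ ‖v‖ ^ (α / (α - 1)) = ‖u‖ ^ α}

/-- A multivalued operator `A : V → Set V*` is monotone if
`⟨v₁ - v₂, u₁ - u₂⟩ ≥ 0` for all `v₁ ∈ A u₁`, `v₂ ∈ A u₂`. -/
def MonotoneOp {V : Type*} [NormedAddCommGroup V] [NormedSpace ℝ V]
    (A : V → Set (StrongDual ℝ V)) : Prop :=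
  ∀ u₁ u₂ : V, ∀ v₁ ∈ A u₁, ∀ v₂ ∈ A u₂, 0 ≤ (v₁ - v₂) (u₁ - u₂)

/-- A monotone multivalued operator is maximal monotone if its graph is not properly
contained in the graph of any other monotone operator. -/
def MaximalMonotoneOp {V : Type*} [NormedAddCommGroup V] [NormedSpace ℝ V]
    (A : V → Set (StrongDual ℝ V)) : Prop :=
  MonotoneOp A ∧
    ∀ B : V → Set (StrongDual ℝ V), MonotoneOp B → (∀ u, A u ⊆ B u) → ∀ u, B u = A u

/-!
Along `u i → x`, selections `f i ∈ J (u i)` have norm `‖u i‖ ^ (α - 1)`, hence eventually lie in a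
fixed ball, which is weak-* compact by Banach-Alaoglu, and it suffices to identify the weak-*
cluster points. Boundedness makes the pairing `f i (u i)` pass to the limit, and the dual norm is
weak-* lower semicontinuous, so any cluster point `v` satisfies `v x = ‖x‖ ^ α` and
`‖v‖ ≤ ‖x‖ ^ (α - 1)`; together these force `v ∈ J x`. Strict convexity of the dual makes `J x` a
singleton, because the triangle inequality is an equality for functionals that attain their norm
at a common vector.
-/

section OperatorLimits

variable {ι 𝕜 E F : Type*} [NontriviallyNormedField 𝕜] [SeminormedAddCommGroup E]
  [SeminormedAddCommGroup F] [NormedSpace 𝕜 E] [NormedSpace 𝕜 F] {l : Filter ι}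
  {f : ι → E →L[𝕜] F}

theorem tendsto_apply_of_isBoundedUnder_norm {u : ι → E} {x : E} {y : F}
    (hf : IsBoundedUnder (· ≤ ·) l fun i => ‖f i‖) (hfx : Tendsto (fun i => f i x) l (𝓝 y))
    (hu : Tendsto u l (𝓝 x)) : Tendsto (fun i => f i (u i)) l (𝓝 y) := by
  have hdiff : Tendsto (fun i => f i (u i - x)) l (𝓝 0) :=
    (tendsto_sub_nhds_zero_iff.2 hu).op_zero_isBoundedUnder_le hf (fun a T => T a)
      fun a T => (T.le_opNorm a).trans_eq (mul_comm _ _)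
  simpa only [map_sub, sub_add_cancel, zero_add] using hdiff.add hfx

theorem opNorm_le_of_tendsto_apply [l.NeBot] {g : E →L[𝕜] F} {C : ℝ}
    (hf : ∀ y, Tendsto (fun i => f i y) l (𝓝 (g y)))
    (hC : Tendsto (fun i => ‖f i‖) l (𝓝 C)) : ‖g‖ ≤ C :=
  g.opNorm_le_bound (ge_of_tendsto' hC fun _ => norm_nonneg _) fun y =>
    le_of_tendsto_of_tendsto' (hf y).norm (hC.mul_const ‖y‖) fun i => (f i).le_opNorm y

end OperatorLimits

theorem sameRay_of_apply_eq_norm_mul_norm {E : Type*} [NormedAddCommGroup E]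
    [NormedSpace ℝ E] [StrictConvexSpace ℝ (StrongDual ℝ E)] {f g : StrongDual ℝ E} {x : E}
    (hx : x ≠ 0) (hf : f x = ‖f‖ * ‖x‖) (hg : g x = ‖g‖ * ‖x‖) : SameRay ℝ f g := by
  refine sameRay_iff_norm_add.2 (le_antisymm (norm_add_le f g) ?_)
  refine le_of_mul_le_mul_right ?_ (norm_pos_iff.2 hx)
  calc
    (‖f‖ + ‖g‖) * ‖x‖ = (f + g) x := by rw [add_mul, ← hf, ← hg, add_apply]
    _ ≤ ‖(f + g) x‖ := Real.le_norm_self _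
    _ ≤ ‖f + g‖ * ‖x‖ := (f + g).le_opNorm x

theorem rpow_sub_one_mul_self {r α : ℝ} (hr : 0 ≤ r) (hα : α ≠ 0) :
    r ^ (α - 1) * r = r ^ α := by
  rw [← Real.rpow_add_one' hr (by rwa [sub_add_cancel]), sub_add_cancel]

section DualityMap

variable {α : ℝ} {V : Type*} [NormedAddCommGroup V] [NormedSpace ℝ V] {x : V}
  {v : StrongDual ℝ V}

theorem mem_genJ_iff_norm_eq (h0 : α ≠ 0) (h1 : α ≠ 1) :
    v ∈ genJ α V x ↔ v x = ‖x‖ ^ α ∧ ‖v‖ = ‖x‖ ^ (α - 1) := by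
  have h1' : α - 1 ≠ 0 := sub_ne_zero.2 h1
  have hpow : ‖x‖ ^ α = (‖x‖ ^ (α - 1)) ^ (α / (α - 1)) := by
    rw [← Real.rpow_mul (norm_nonneg x), mul_div_cancel₀ α h1']
  refine and_congr_right fun _ => ?_
  rw [hpow, Real.rpow_left_inj (norm_nonneg v) (by positivity) (div_ne_zero h0 h1')]

theorem mem_genJ_of_norm_le (h0 : α ≠ 0) (h1 : α ≠ 1) (hvx : v x = ‖x‖ ^ α)
    (hv : ‖v‖ ≤ ‖x‖ ^ (α - 1)) : v ∈ genJ α V x := by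
  refine (mem_genJ_iff_norm_eq h0 h1).2 ⟨hvx, hv.antisymm ?_⟩
  rcases eq_or_ne x 0 with rfl | hx
  · rw [norm_zero, Real.zero_rpow (sub_ne_zero.2 h1)]
    exact norm_nonneg v
  · refine le_of_mul_le_mul_right ?_ (norm_pos_iff.2 hx)
    calc
      ‖x‖ ^ (α - 1) * ‖x‖ = v x := by rw [rpow_sub_one_mul_self (norm_nonneg x) h0, hvx]
      _ ≤ ‖v x‖ := Real.le_norm_self _
      _ ≤ ‖v‖ * ‖x‖ := v.le_opNorm x

theorem apply_eq_norm_mul_norm_of_mem_genJ (h0 : α ≠ 0) (h1 : α ≠ 1) (hv : v ∈ genJ α V x) :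
    v x = ‖v‖ * ‖x‖ := by
  obtain ⟨hvx, hnorm⟩ := (mem_genJ_iff_norm_eq h0 h1).1 hv
  rw [hvx, hnorm, rpow_sub_one_mul_self (norm_nonneg x) h0]

theorem subsingleton_genJ [StrictConvexSpace ℝ (StrongDual ℝ V)] (h0 : α ≠ 0) (h1 : α ≠ 1)
    (x : V) : (genJ α V x).Subsingleton := by
  intro v hv w hw
  have hv_norm := ((mem_genJ_iff_norm_eq h0 h1).1 hv).2
  have hw_norm := ((mem_genJ_iff_norm_eq h0 h1).1 hw).2
  rcases eq_or_ne x 0 with rfl | hx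
  · rw [norm_zero, Real.zero_rpow (sub_ne_zero.2 h1), norm_eq_zero] at hv_norm hw_norm
    rw [hv_norm, hw_norm]
  · have hray : SameRay ℝ v w := sameRay_of_apply_eq_norm_mul_norm hx
      (apply_eq_norm_mul_norm_of_mem_genJ h0 h1 hv) (apply_eq_norm_mul_norm_of_mem_genJ h0 h1 hw)
    exact hray.eq_of_norm_eq (hv_norm.trans hw_norm.symm)

variable {ι : Type*} {l : Filter ι} {u : ι → V} {f : ι → StrongDual ℝ V}

theorem tendsto_norm_of_mem_genJ (hα : 1 < α) (hf : ∀ᶠ i in l, f i ∈ genJ α V (u i))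
    (hu : Tendsto u l (𝓝 x)) : Tendsto (fun i => ‖f i‖) l (𝓝 (‖x‖ ^ (α - 1))) := by
  refine (hu.norm.rpow_const (Or.inr (sub_pos.2 hα).le)).congr' ?_
  filter_upwards [hf] with i hi
  exact ((mem_genJ_iff_norm_eq (by positivity) hα.ne').1 hi).2.symm

theorem mem_genJ_of_tendsto [l.NeBot] (hα : 1 < α) (hf : ∀ᶠ i in l, f i ∈ genJ α V (u i))
    (hu : Tendsto u l (𝓝 x)) (hfv : ∀ y, Tendsto (fun i => f i y) l (𝓝 (v y))) :
    v ∈ genJ α V x := by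
  have hnorm := tendsto_norm_of_mem_genJ hα hf hu
  have hpair : Tendsto (fun i => f i (u i)) l (𝓝 (v x)) :=
    tendsto_apply_of_isBoundedUnder_norm hnorm.isBoundedUnder_le (hfv x) hu
  have hpow : Tendsto (fun i => f i (u i)) l (𝓝 (‖x‖ ^ α)) :=
    (hu.norm.rpow_const (Or.inr (by positivity))).congr' (hf.mono fun _ hi => hi.1.symm)
  exact mem_genJ_of_norm_le (by positivity) hα.ne' (tendsto_nhds_unique hpair hpow)
    (opNorm_le_of_tendsto_apply hfv hnorm)

theorem statement3_general (hα : 1 < α) (hx : (genJ α V x).Subsingleton) (hv : v ∈ genJ α V x)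
    (hf : ∀ᶠ i in l, f i ∈ genJ α V (u i)) (hu : Tendsto u l (𝓝 x)) (w : V) :
    Tendsto (fun i => f i w) l (𝓝 (v w)) := by
  obtain ⟨C, hC⟩ := (tendsto_norm_of_mem_genJ hα hf hu).isBoundedUnder_le
  have hball : ∀ᶠ i in l, StrongDual.toWeakDual (f i) ∈
      WeakDual.toStrongDual ⁻¹' Metric.closedBall (0 : StrongDual ℝ V) C :=
    (eventually_map.1 hC).mono fun _ hi => mem_closedBall_zero_iff.2 hi
  suffices hweak : Tendsto (fun i => StrongDual.toWeakDual (f i)) l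
      (𝓝 (StrongDual.toWeakDual v)) from ((WeakDual.eval_continuous w).tendsto _).comp hweak
  refine (WeakDual.isCompact_closedBall 0 C).tendsto_nhds_of_unique_mapClusterPt hball ?_
  intro v' _ hcluster
  obtain ⟨U, hUl, hU⟩ := mapClusterPt_iff_ultrafilter.1 hcluster
  have hv' : WeakDual.toStrongDual v' ∈ genJ α V x :=
    mem_genJ_of_tendsto hα (hf.filter_mono hUl) (hu.mono_left hUl) fun y =>
      ((WeakDual.eval_continuous y).tendsto v').comp hU
  exact congrArg StrongDual.toWeakDual (hx hv' hv)

end DualityMap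

/-- when the dual is strictly convex, the single-valued duality map is
demicontinuous from the norm topology into the weak-* topology (pointwise
convergence on V). -/
theorem statement3 (α : ℝ) (hα : 1 < α) (V : Type*) [NormedAddCommGroup V]
    [NormedSpace ℝ V] [StrictConvexSpace ℝ (StrongDual ℝ V)]
    (j : V → StrongDual ℝ V) (hj : ∀ u : V, j u ∈ genJ α V u)
    (u : ℕ → V) (x : V)
    (hconv : Tendsto (fun n => ‖u n - x‖) atTop (𝓝 0)) :
    ∀ w : V, Tendsto (fun n => (j (u n)) w) atTop (𝓝 ((j x) w)) :=
  statement3_general hα (subsingleton_genJ (by positivity) hα.ne' x) (hj x)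
    (.of_forall fun n => hj (u n)) (tendsto_iff_norm_sub_tendsto_zero.2 hconv)
end

section
/- Let α > 1, let V be a reflexive real Banach space such that both V and its dual V* are uniformly convex, and let A : V → Set V* be a maximal-monotone multivalued operator. Then for every λ > 0 and every x ∈ V there exists a unique x_λ ∈ V solving the resolvent equation 0 ∈ J(x_λ − x) + λ A(x_λ), i.e. there exist w ∈ J(x_λ − x) and y ∈ A(x_λ) with w + λ y = 0, and any two such solutions coincide. -/
/-!
By Young's inequality `⟨w, u⟩ ≤ ‖u‖ ^ α / α + ‖w‖ ^ β / β`, where `β = α / (α - 1)`, and `w ∈ J u`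
exactly when equality holds.

*Existence.* Translation and scaling reduce the claim to finding `w ∈ A u` with `-w ∈ J u`.
By maximality the Fitzpatrick function `F` of `A` dominates the pairing on `V × V*`, hence also
the concave function `(v, w) ↦ -(‖v‖ ^ α / α + ‖w‖ ^ β / β)`. Hahn–Banach puts a continuous affine
function between the two, and reflexivity represents its linear part by a point `(z, ζ)` of
`V × V*`. Since `F` agrees with the pairing on the graph of `A`, the point `(-z, -ζ)` is
monotonically related to this graph, so it lies on it, and there Young's inequality is an equality.

*Uniqueness.* If `⟨w₁ - w₂, u₁ - u₂⟩ ≤ 0` with `wᵢ ∈ J uᵢ`, then Young's inequality is also an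
equality at `(u₂, w₁)`, so `w₁ ∈ J u₁ ∩ J u₂`, and strict convexity of the norm gives `u₁ = u₂`.
-/

open NormedSpace Filter Topology

section YoungEnergy

/-- The convex function `(x, y) ↦ ‖x‖ ^ α / α + ‖y‖ ^ β / β` on a product of normed spaces, the
right-hand side of Young's inequality when `α` and `β` are conjugate exponents. -/
noncomputable def youngEnergy (α β : ℝ) {E F : Type*} [Norm E] [Norm F] (p : E × F) : ℝ :=
  ‖p.1‖ ^ α / α + ‖p.2‖ ^ β / β

variable {α β : ℝ} {E F : Type*} [SeminormedAddCommGroup E] [SeminormedAddCommGroup F]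

lemma youngEnergy_neg_left (x : E) (y : F) :
    youngEnergy α β (-x, y) = youngEnergy α β (x, y) := by
  simp only [youngEnergy, norm_neg]

lemma continuous_youngEnergy (hα : 0 ≤ α) (hβ : 0 ≤ β) :
    Continuous (youngEnergy α β : E × F → ℝ) :=
  ((continuous_fst.norm.rpow_const fun _ => Or.inr hα).div_const α).add
    ((continuous_snd.norm.rpow_const fun _ => Or.inr hβ).div_const β)

lemma convexOn_norm_rpow [NormedSpace ℝ E] (hα : 1 ≤ α) :
    ConvexOn ℝ Set.univ fun x : E => ‖x‖ ^ α := by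
  have himage : norm '' (Set.univ : Set E) ⊆ Set.Ici 0 := by
    rintro _ ⟨x, -, rfl⟩
    exact norm_nonneg x
  have hconvex : Convex ℝ (norm '' (Set.univ : Set E)) :=
    (isPreconnected_univ.image _ continuous_norm.continuousOn).ordConnected.convex
  exact ((convexOn_rpow hα).subset himage hconvex).comp convexOn_univ_norm
    ((Real.monotoneOn_rpow_Ici_of_exponent_nonneg (by linarith)).mono himage)

lemma convexOn_youngEnergy [NormedSpace ℝ E] [NormedSpace ℝ F] (hα : 1 ≤ α) (hβ : 1 ≤ β) :
    ConvexOn ℝ Set.univ (youngEnergy α β : E × F → ℝ) := by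
  have hα_inv : 0 ≤ α⁻¹ := inv_nonneg.2 (zero_le_one.trans hα)
  have hβ_inv : 0 ≤ β⁻¹ := inv_nonneg.2 (zero_le_one.trans hβ)
  have hE := (convexOn_norm_rpow hα).comp_linearMap (LinearMap.fst ℝ E F)
  have hF := (convexOn_norm_rpow hβ).comp_linearMap (LinearMap.snd ℝ E F)
  refine ((hE.smul hα_inv).add (hF.smul hβ_inv)).congr fun p _ => ?_
  simp [youngEnergy, div_eq_inv_mul]

lemma norm_mul_norm_le_youngEnergy (h : α.HolderConjugate β) (x : E) (y : F) :
    ‖x‖ * ‖y‖ ≤ youngEnergy α β (x, y) :=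
  Real.young_inequality_of_nonneg (norm_nonneg x) (norm_nonneg y) h

lemma dual_apply_le_norm_mul_norm [NormedSpace ℝ E] (u : E) (w : StrongDual ℝ E) :
    w u ≤ ‖u‖ * ‖w‖ :=
  ((Real.le_norm_self _).trans (w.le_opNorm u)).trans_eq (mul_comm _ _)

lemma dual_apply_le_youngEnergy [NormedSpace ℝ E] (h : α.HolderConjugate β) (u : E)
    (w : StrongDual ℝ E) : w u ≤ youngEnergy α β (u, w) :=
  (dual_apply_le_norm_mul_norm u w).trans (norm_mul_norm_le_youngEnergy h u w)

lemma neg_youngEnergy_le_dual_apply [NormedSpace ℝ E] (h : α.HolderConjugate β) (u : E)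
    (w : StrongDual ℝ E) : -youngEnergy α β (u, w) ≤ w u := by
  have hle := dual_apply_le_youngEnergy h (-u) w
  rw [map_neg, youngEnergy_neg_left] at hle
  exact neg_le.1 hle

lemma div_add_div_eq_of_holderConjugate (h : α.HolderConjugate β) (r : ℝ) :
    r / α + r / β = r := by
  rw [div_eq_mul_inv, div_eq_mul_inv, ← mul_add, h.inv_add_inv_eq_one, mul_one]

end YoungEnergy

section DualityMapping

variable {α β : ℝ} {V : Type*} [NormedAddCommGroup V] [NormedSpace ℝ V] {u u₁ u₂ : V}
  {w w₁ w₂ : StrongDual ℝ V}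

lemma mem_genJ_iff (h : α.HolderConjugate β) :
    w ∈ genJ α V u ↔ w u = ‖u‖ ^ α ∧ ‖w‖ ^ β = ‖u‖ ^ α := by
  rw [h.conjugate_eq]
  rfl

lemma mem_genJ_iff_apply_eq_youngEnergy (h : α.HolderConjugate β) :
    w ∈ genJ α V u ↔ w u = youngEnergy α β (u, w) := by
  rw [mem_genJ_iff h]
  constructor
  · rintro ⟨happly, hnorm⟩
    rw [youngEnergy, hnorm, div_add_div_eq_of_holderConjugate h, happly]
  · intro heq
    have hyoung : ‖u‖ * ‖w‖ = youngEnergy α β (u, w) :=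
      (norm_mul_norm_le_youngEnergy h u w).antisymm (heq ▸ dual_apply_le_norm_mul_norm u w)
    have hnorm : ‖u‖ ^ α = ‖w‖ ^ β :=
      (Real.young_inequality_eq_iff_of_nonneg (norm_nonneg u) (norm_nonneg w) h).1 hyoung
    rw [heq, youngEnergy, ← hnorm, div_add_div_eq_of_holderConjugate h]
    exact ⟨rfl, rfl⟩

lemma inclusionInDoubleDual_mem_genJ_iff (h : α.HolderConjugate β) :
    inclusionInDoubleDual ℝ V u ∈ genJ β (StrongDual ℝ V) w ↔ w ∈ genJ α V u := by
  have hnorm : ‖inclusionInDoubleDual ℝ V u‖ = ‖u‖ := (inclusionInDoubleDualLi ℝ).norm_map u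
  rw [mem_genJ_iff_apply_eq_youngEnergy h, mem_genJ_iff_apply_eq_youngEnergy h.symm]
  simp only [youngEnergy, dual_def, hnorm, add_comm]

lemma genJ_nonempty (hα : 1 < α) (u : V) : (genJ α V u).Nonempty := by
  have h := Real.HolderConjugate.conjExponent hα
  rcases eq_or_ne u 0 with rfl | hu
  · refine ⟨0, (mem_genJ_iff h).2 ?_⟩
    simp [Real.zero_rpow h.ne_zero, Real.zero_rpow h.symm.ne_zero]
  · obtain ⟨g, hg, hgu⟩ := exists_dual_vector ℝ u (norm_ne_zero_iff.2 hu)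
    refine ⟨‖u‖ ^ (α - 1) • g, (mem_genJ_iff h).2 ⟨?_, ?_⟩⟩
    · rw [smul_apply, hgu, smul_eq_mul, RCLike.ofReal_real_eq_id, id,
        ← Real.rpow_add_one (norm_ne_zero_iff.2 hu), sub_add_cancel]
    · rw [norm_smul, hg, mul_one, Real.norm_of_nonneg (by positivity),
        ← Real.rpow_mul (norm_nonneg u), h.sub_one_mul_conj]

lemma exists_mem_genJ (hα : 1 < α) (hrefl : Function.Surjective (inclusionInDoubleDual ℝ V))
    (w : StrongDual ℝ V) : ∃ u, w ∈ genJ α V u := by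
  have h := Real.HolderConjugate.conjExponent hα
  obtain ⟨F, hF⟩ := genJ_nonempty h.symm.lt w
  obtain ⟨u, rfl⟩ := hrefl F
  exact ⟨u, (inclusionInDoubleDual_mem_genJ_iff h).1 hF⟩

lemma apply_eq_norm_mul_norm_of_mem_genJ_s4 (hα : 1 < α) (hw : w ∈ genJ α V u) :
    w u = ‖u‖ * ‖w‖ := by
  have h := Real.HolderConjugate.conjExponent hα
  refine (dual_apply_le_norm_mul_norm u w).antisymm ?_
  rw [(mem_genJ_iff_apply_eq_youngEnergy h).1 hw]
  exact norm_mul_norm_le_youngEnergy h u w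

lemma mem_genJ_of_sub_apply_sub_nonpos (hα : 1 < α) (h₁ : w₁ ∈ genJ α V u₁)
    (h₂ : w₂ ∈ genJ α V u₂) (hle : (w₁ - w₂) (u₁ - u₂) ≤ 0) : w₁ ∈ genJ α V u₂ := by
  have h := Real.HolderConjugate.conjExponent hα
  rw [mem_genJ_iff_apply_eq_youngEnergy h] at h₁ h₂ ⊢
  have h₁₂ := dual_apply_le_youngEnergy h u₁ w₂
  have h₂₁ := dual_apply_le_youngEnergy h u₂ w₁
  simp only [youngEnergy, map_sub, sub_apply] at h₁ h₂ h₁₂ h₂₁ hle ⊢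
  linarith

lemma eq_of_mem_genJ_of_mem_genJ [StrictConvexSpace ℝ V] (hα : 1 < α) (h₁ : w ∈ genJ α V u₁)
    (h₂ : w ∈ genJ α V u₂) : u₁ = u₂ := by
  have hnorm : ‖u₁‖ = ‖u₂‖ := by
    refine (Real.rpow_left_inj (norm_nonneg _) (norm_nonneg _) (by linarith : α ≠ 0)).1 ?_
    exact h₁.2.symm.trans h₂.2
  rcases eq_or_ne w 0 with rfl | hw
  · have hu₁ : ‖u₁‖ = 0 :=
      (Real.rpow_eq_zero (norm_nonneg _) (by linarith)).1 h₁.1.symm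
    rw [norm_eq_zero.1 hu₁, norm_eq_zero.1 (hnorm.symm.trans hu₁)]
  · refine eq_of_norm_eq_of_norm_add_eq hnorm (le_antisymm (norm_add_le _ _) ?_)
    refine le_of_mul_le_mul_right ?_ (norm_pos_iff.2 hw)
    calc (‖u₁‖ + ‖u₂‖) * ‖w‖ = w (u₁ + u₂) := by
          rw [map_add, apply_eq_norm_mul_norm_of_mem_genJ_s4 hα h₁,
            apply_eq_norm_mul_norm_of_mem_genJ_s4 hα h₂, add_mul]
      _ ≤ ‖u₁ + u₂‖ * ‖w‖ := dual_apply_le_norm_mul_norm _ w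

lemma eq_of_mem_genJ_of_sub_apply_sub_nonpos [StrictConvexSpace ℝ V] (hα : 1 < α)
    (h₁ : w₁ ∈ genJ α V u₁) (h₂ : w₂ ∈ genJ α V u₂) (hle : (w₁ - w₂) (u₁ - u₂) ≤ 0) :
    u₁ = u₂ :=
  eq_of_mem_genJ_of_mem_genJ hα h₁ (mem_genJ_of_sub_apply_sub_nonpos hα h₁ h₂ hle)

end DualityMapping

lemma exists_dual_sub_le_add_of_neg_le {E : Type*} [AddCommGroup E] [Module ℝ E]
    [TopologicalSpace E] [IsTopologicalAddGroup E] [ContinuousSMul ℝ E] {φ : E → ℝ}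
    (hφ : ConvexOn ℝ Set.univ φ) (hφc : Continuous φ) {K : Set (E × ℝ)} (hK : Convex ℝ K)
    (hKne : K.Nonempty) (hle : ∀ p ∈ K, -φ p.1 ≤ p.2) :
    ∃ ℓ : StrongDual ℝ E, ∀ x, ∀ p ∈ K, ℓ x - φ x ≤ ℓ p.1 + p.2 := by
  let H : Set (E × ℝ) := {p | p.2 < -φ p.1}
  have hH : Convex ℝ H := by
    simpa only [H, Set.mem_univ, true_and, Pi.neg_apply] using hφ.neg.convex_strict_hypograph
  have hHopen : IsOpen H := isOpen_lt continuous_snd (hφc.comp continuous_fst).neg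
  have hdisj : Disjoint H K := Set.disjoint_left.2 fun p hpH hpK => (hle p hpK).not_gt hpH
  obtain ⟨f, s, hfH, hfK⟩ := geometric_hahn_banach_open hH hHopen hK hdisj
  have hsep (x : E) {t : ℝ} (ht : t < -φ x) {p : E × ℝ} (hp : p ∈ K) : f (x, t) < f p :=
    (hfH (x, t) ht).trans_le (hfK p hp)
  let c : ℝ := f (0, 1)
  have hf (x : E) (t : ℝ) : f (x, t) = f (x, 0) + t * c := by
    rw [← smul_eq_mul, ← map_smul, ← map_add]
    simp
  have hc : 0 < c := by
    obtain ⟨⟨y, t⟩, hy⟩ := hKne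
    have hlt := hsep y (sub_one_lt (-φ y)) hy
    rw [hf, hf y t, add_lt_add_iff_left] at hlt
    have hyt : -φ y - 1 < t := (sub_one_lt _).trans_le (hle _ hy)
    exact (mul_pos_iff_of_pos_left (sub_pos.2 hyt)).1 (by linarith)
  refine ⟨c⁻¹ • f.comp (ContinuousLinearMap.inl ℝ E ℝ), fun x p hp => ?_⟩
  refine le_of_forall_pos_sub_le fun ε hε => ?_
  have hlt := hsep x (sub_lt_self (-φ x) hε) hp
  rw [hf, ← Prod.mk.eta (p := p), hf p.1] at hlt
  have hdiv := mul_lt_mul_of_pos_left hlt (inv_pos.2 hc)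
  simp only [mul_add, mul_comm _ c, inv_mul_cancel_left₀ hc.ne'] at hdiv
  simp only [smul_apply, ContinuousLinearMap.comp_apply, ContinuousLinearMap.inl_apply,
    smul_eq_mul]
  linarith

lemma exists_dual_prod_apply_eq {E V : Type*} [AddCommGroup E] [Module ℝ E] [TopologicalSpace E]
    [SeminormedAddCommGroup V] [NormedSpace ℝ V]
    (hrefl : Function.Surjective (inclusionInDoubleDual ℝ V))
    (ℓ : StrongDual ℝ (E × StrongDual ℝ V)) :
    ∃ (ζ : StrongDual ℝ E) (z : V), ∀ x w, ℓ (x, w) = ζ x + w z := by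
  obtain ⟨z, hz⟩ := hrefl (ℓ.comp (ContinuousLinearMap.inr ℝ E (StrongDual ℝ V)))
  refine ⟨ℓ.comp (ContinuousLinearMap.inl ℝ E (StrongDual ℝ V)), z, fun x w => ?_⟩
  rw [← dual_def ℝ V z w, hz]
  simp [← map_add]

section MonotoneOperators

variable {V : Type*} [NormedAddCommGroup V] [NormedSpace ℝ V] {A : V → Set (StrongDual ℝ V)}

lemma MonotoneOp.union_singleton (hA : MonotoneOp A) {z : V} {ζ : StrongDual ℝ V}
    (hζ : ∀ u, ∀ v ∈ A u, 0 ≤ (v - ζ) (u - z)) :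
    MonotoneOp fun u => A u ∪ {v | u = z ∧ v = ζ} := by
  rintro u₁ u₂ v₁ (h₁ | ⟨rfl, rfl⟩) v₂ (h₂ | ⟨rfl, rfl⟩)
  · exact hA _ _ _ h₁ _ h₂
  · exact hζ _ _ h₁
  · rw [← neg_sub v₂, ← neg_sub u₂, neg_apply, map_neg, neg_neg]
    exact hζ _ _ h₂
  · simp

lemma maximalMonotoneOp_iff : MaximalMonotoneOp A ↔
    MonotoneOp A ∧ ∀ z ζ, (∀ u, ∀ v ∈ A u, 0 ≤ (v - ζ) (u - z)) → ζ ∈ A z := by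
  refine ⟨fun hA => ⟨hA.1, fun z ζ hζ => ?_⟩, fun hA => ⟨hA.1, fun B hB hAB u => ?_⟩⟩
  · rw [← hA.2 _ (hA.1.union_singleton hζ) (fun _ => Set.subset_union_left) z]
    exact Or.inr ⟨rfl, rfl⟩
  · exact (hAB u).antisymm' fun v hv => hA.2 u v fun a va hva => hB _ _ _ (hAB a hva) _ hv

namespace MaximalMonotoneOp

lemma mem_of_forall_nonneg (hA : MaximalMonotoneOp A) {z : V} {ζ : StrongDual ℝ V}
    (hζ : ∀ u, ∀ v ∈ A u, 0 ≤ (v - ζ) (u - z)) : ζ ∈ A z :=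
  (maximalMonotoneOp_iff.1 hA).2 z ζ hζ

lemma exists_mem (hA : MaximalMonotoneOp A) : ∃ u, (A u).Nonempty := by
  by_contra! hempty
  have h0 : (0 : StrongDual ℝ V) ∈ A 0 := hA.mem_of_forall_nonneg fun u v hv => by
    simp [hempty u] at hv
  simp [hempty 0] at h0

open scoped Pointwise in
lemma smul_comp_add_right (hA : MaximalMonotoneOp A) {c : ℝ} (hc : 0 < c) (x : V) :
    MaximalMonotoneOp fun u => c • A (u + x) := by
  refine maximalMonotoneOp_iff.2 ⟨?_, fun z ζ hζ => ?_⟩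
  · rintro u₁ u₂ _ ⟨v₁, hv₁, rfl⟩ _ ⟨v₂, hv₂, rfl⟩
    have hmono := hA.1 _ _ _ hv₁ _ hv₂
    rw [add_sub_add_right_eq_sub] at hmono
    have hscale : c • v₁ - c • v₂ = c • (v₁ - v₂) := (smul_sub c v₁ v₂).symm
    exact hscale ▸ smul_nonneg hc.le hmono
  · refine (Set.mem_smul_set_iff_inv_smul_mem₀ hc.ne' _ _).2 (hA.mem_of_forall_nonneg ?_)
    intro u v hv
    have hrel := hζ (u - x) (c • v) (Set.smul_mem_smul_set (by rwa [sub_add_cancel]))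
    have hscale : v - c⁻¹ • ζ = c⁻¹ • (c • v - ζ) := by
      rw [smul_sub, inv_smul_smul₀ hc.ne']
    rw [hscale, smul_apply, add_comm z x, ← sub_sub]
    exact smul_nonneg (inv_nonneg.2 hc.le) hrel

end MaximalMonotoneOp

/-- The epigraph of the Fitzpatrick function
`F(x, ξ) = sup {⟨v, x⟩ + ⟨ξ, u⟩ - ⟨v, u⟩ | v ∈ A u}` of the operator `A`, to be separated from the
hypograph of `-youngEnergy`. The function itself may take the value `∞`, so it is encoded by its
epigraph, a subset of `(V × V*) × ℝ`. -/
def fitzpatrickEpigraph (A : V → Set (StrongDual ℝ V)) : Set ((V × StrongDual ℝ V) × ℝ) :=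
  {p | ∀ u, ∀ v ∈ A u, v p.1.1 + p.1.2 u - v u ≤ p.2}

lemma convex_fitzpatrickEpigraph (A : V → Set (StrongDual ℝ V)) :
    Convex ℝ (fitzpatrickEpigraph A) := by
  intro p hp q hq a b ha hb hab u v hv
  have hpq := add_le_add (mul_le_mul_of_nonneg_left (hp u v hv) ha)
    (mul_le_mul_of_nonneg_left (hq u v hv) hb)
  have hvu : v u = a * v u + b * v u := by rw [← add_mul, hab, one_mul]
  simp only [Prod.fst_add, Prod.snd_add, Prod.smul_fst, Prod.smul_snd, smul_eq_mul, map_add,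
    map_smul, add_apply, smul_apply]
  linarith

lemma MonotoneOp.mem_fitzpatrickEpigraph (hA : MonotoneOp A) {u : V} {v : StrongDual ℝ V}
    (hv : v ∈ A u) : ((u, v), v u) ∈ fitzpatrickEpigraph A := by
  intro u' v' hv'
  have hmono := hA _ _ _ hv _ hv'
  simp only [map_sub, sub_apply] at hmono ⊢
  linarith

namespace MaximalMonotoneOp

lemma apply_le_of_mem_fitzpatrickEpigraph (hA : MaximalMonotoneOp A)
    {p : (V × StrongDual ℝ V) × ℝ} (hp : p ∈ fitzpatrickEpigraph A) : p.1.2 p.1.1 ≤ p.2 := by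
  by_contra! hlt
  have hmem : p.1.2 ∈ A p.1.1 := hA.mem_of_forall_nonneg fun u v hv => by
    have hle := hp u v hv
    simp only [map_sub, sub_apply]
    linarith
  have hle := hp _ _ hmem
  linarith

lemma exists_dual_sub_youngEnergy_le {α β : ℝ} (h : α.HolderConjugate β)
    (hA : MaximalMonotoneOp A) : ∃ ℓ : StrongDual ℝ (V × StrongDual ℝ V),
      ∀ q, ∀ u, ∀ v ∈ A u, ℓ q - youngEnergy α β q ≤ ℓ (u, v) + v u := by
  obtain ⟨u₀, v₀, hv₀⟩ := hA.exists_mem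
  obtain ⟨ℓ, hℓ⟩ := exists_dual_sub_le_add_of_neg_le
    (convexOn_youngEnergy h.lt.le h.symm.lt.le) (continuous_youngEnergy h.nonneg h.symm.nonneg)
    (convex_fitzpatrickEpigraph A) ⟨_, hA.1.mem_fitzpatrickEpigraph hv₀⟩ fun p hp =>
      (neg_youngEnergy_le_dual_apply h _ _).trans (hA.apply_le_of_mem_fitzpatrickEpigraph hp)
  exact ⟨ℓ, fun q u v hv => hℓ q _ (hA.1.mem_fitzpatrickEpigraph hv)⟩

lemma exists_youngEnergy_le {α β : ℝ} (h : α.HolderConjugate β) (hA : MaximalMonotoneOp A)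
    (hrefl : Function.Surjective (inclusionInDoubleDual ℝ V)) :
    ∃ (z : V) (ζ : StrongDual ℝ V), ∀ u, ∀ v ∈ A u,
      youngEnergy α β (z, ζ) ≤ ζ u + v z + v u := by
  obtain ⟨ℓ, hℓ⟩ := hA.exists_dual_sub_youngEnergy_le h
  obtain ⟨ζ, z, hzζ⟩ := exists_dual_prod_apply_eq hrefl ℓ
  -- The left-hand side of `hℓ` is maximal at the point `(x, ξ)` with `ζ ∈ J x` and `ξ ∈ J z`.
  obtain ⟨x, hx⟩ := exists_mem_genJ h.lt hrefl ζ
  obtain ⟨ξ, hξ⟩ := genJ_nonempty h.lt z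
  rw [mem_genJ_iff_apply_eq_youngEnergy h] at hx hξ
  refine ⟨z, ζ, fun u v hv => ?_⟩
  have hle := hℓ (x, ξ) u v hv
  rw [hzζ, hzζ, hx, hξ] at hle
  simp only [youngEnergy] at hle ⊢
  linarith

theorem exists_mem_neg_mem_genJ {α : ℝ} (hα : 1 < α) (hA : MaximalMonotoneOp A)
    (hrefl : Function.Surjective (inclusionInDoubleDual ℝ V)) :
    ∃ u, ∃ v ∈ A u, -v ∈ genJ α V u := by
  have h := Real.HolderConjugate.conjExponent hα
  obtain ⟨z, ζ, hzζ⟩ := hA.exists_youngEnergy_le h hrefl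
  have hmem : -ζ ∈ A (-z) := hA.mem_of_forall_nonneg fun u v hv => by
    have hle := hzζ u v hv
    have hyoung := neg_youngEnergy_le_dual_apply h z ζ
    simp only [map_sub, map_neg, sub_apply, neg_apply]
    linarith
  refine ⟨-z, -ζ, hmem, (mem_genJ_iff_apply_eq_youngEnergy h).2 ?_⟩
  refine (dual_apply_le_youngEnergy h _ _).antisymm ?_
  have hle := hzζ _ _ hmem
  simp only [map_neg, neg_apply, neg_neg, youngEnergy_neg_left] at hle ⊢
  linarith

end MaximalMonotoneOp

end MonotoneOperators

theorem statement4_general {α : ℝ} (hα : 1 < α) {V : Type*} [NormedAddCommGroup V]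
    [NormedSpace ℝ V] [StrictConvexSpace ℝ V]
    (hrefl : Function.Surjective (inclusionInDoubleDual ℝ V))
    {A : V → Set (StrongDual ℝ V)} (hA : MaximalMonotoneOp A)
    {lam : ℝ} (hlam : 0 < lam) (x : V) :
    ∃! xl : V, ∃ w ∈ genJ α V (xl - x), ∃ y ∈ A xl, w + lam • y = 0 := by
  refine existsUnique_of_exists_of_unique ?_ ?_
  · obtain ⟨u, _, ⟨y, hy, rfl⟩, hJ⟩ :=
      (hA.smul_comp_add_right hlam x).exists_mem_neg_mem_genJ hα hrefl
    exact ⟨u + x, _, by rwa [add_sub_cancel_right], y, hy, neg_add_cancel _⟩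
  · rintro x₁ x₂ ⟨w₁, hw₁, y₁, hy₁, h₁⟩ ⟨w₂, hw₂, y₂, hy₂, h₂⟩
    have hw : w₁ - w₂ = -(lam • (y₁ - y₂)) := by
      rw [eq_neg_of_add_eq_zero_left h₁, eq_neg_of_add_eq_zero_left h₂, smul_sub]
      abel
    refine sub_left_injective (eq_of_mem_genJ_of_sub_apply_sub_nonpos hα hw₁ hw₂ ?_)
    rw [hw, sub_sub_sub_cancel_right, neg_apply, smul_apply, smul_eq_mul, neg_nonpos]
    exact mul_nonneg hlam.le (hA.1 _ _ _ hy₁ _ hy₂)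

/-- existence and uniqueness of solutions of the resolvent equation
for a maximal monotone operator on a reflexive Banach space with uniformly convex
space and dual. -/
theorem statement4 (α : ℝ) (hα : 1 < α) (V : Type*) [NormedAddCommGroup V]
    [NormedSpace ℝ V] [CompleteSpace V] [UniformConvexSpace V]
    [UniformConvexSpace (StrongDual ℝ V)]
    (hrefl : Function.Surjective (inclusionInDoubleDual ℝ V))
    (A : V → Set (StrongDual ℝ V)) (hA : MaximalMonotoneOp A)
    (lam : ℝ) (hlam : 0 < lam) (x : V) :
    ∃! xl : V, ∃ w ∈ genJ α V (xl - x), ∃ y ∈ A xl, w + lam • y = 0 :=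
  statement4_general hα hrefl hA hlam x
end

section
/- Let α > 1 and let V be a real normed space such that both V and its dual V* are strictly convex. If u1, u2 ∈ V, v1 ∈ J(u1), v2 ∈ J(u2) and ⟨v1 − v2, u1 − u2⟩ ≤ 0, then u1 = u2 and v1 = v2. In particular, the generalized duality mapping is strictly monotone: ⟨v1 − v2, u1 − u2⟩ > 0 whenever u1 ≠ u2. -/
open NormedSpace Filter Topology

/-!
If `v₁` and `v₂` attain their norms at `u₁` and `u₂`, then `(v₁ - v₂) (u₁ - u₂)` is the sum of
`(‖v₁‖ - ‖v₂‖) * (‖u₁‖ - ‖u₂‖)`, `‖v₁‖ * ‖u₂‖ - v₁ u₂` and `‖v₂‖ * ‖u₁‖ - v₂ u₁`. For a duality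
mapping `‖vᵢ‖` is a strictly increasing function of `‖uᵢ‖`, so all three are nonnegative, and they
vanish if the sum is nonpositive. Then `‖u₁‖ = ‖u₂‖`, and each of `v₁`, `v₂` attains its norm at
both `u₁` and `u₂`. This is equality in the triangle inequality for `u₁ + u₂` and for `v₁ + v₂`,
which strict convexity turns into `u₁ = u₂` and `v₁ = v₂`.
-/

/-- The duality mapping with gauge `φ`: the functionals that attain their norm at `u` and whose norm
is `φ ‖u‖`. It is meant for `φ` strictly increasing on `[0, ∞)` with `φ 0 = 0`; these conditions are
left to the lemmas that need them. -/
def gaugeDualityMap {V : Type*} [SeminormedAddCommGroup V] [NormedSpace ℝ V] (φ : ℝ → ℝ) (u : V) :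
    Set (StrongDual ℝ V) :=
  {v | v u = ‖v‖ * ‖u‖ ∧ ‖v‖ = φ ‖u‖}

theorem rpow_div_sub_one_eq_rpow_iff {a b α : ℝ} (ha : 0 ≤ a) (hb : 0 ≤ b) (hα₀ : α ≠ 0)
    (hα₁ : α ≠ 1) : b ^ (α / (α - 1)) = a ^ α ↔ b = a ^ (α - 1) := by
  have hsub : α - 1 ≠ 0 := sub_ne_zero.mpr hα₁
  have hpow : a ^ α = (a ^ (α - 1)) ^ (α / (α - 1)) := by
    rw [← Real.rpow_mul ha, mul_div_cancel₀ α hsub]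
  rw [hpow, Real.rpow_left_inj hb (Real.rpow_nonneg ha _) (div_ne_zero hα₀ hsub)]

theorem genJ_eq_gaugeDualityMap {α : ℝ} (hα : 1 < α) {V : Type*} [NormedAddCommGroup V]
    [NormedSpace ℝ V] (u : V) : genJ α V u = gaugeDualityMap (fun t ↦ t ^ (α - 1)) u := by
  have hα₀ : α ≠ 0 := (zero_lt_one.trans hα).ne'
  have hmul : ‖u‖ ^ (α - 1) * ‖u‖ = ‖u‖ ^ α := by
    rw [← Real.rpow_add_one' (norm_nonneg u) (by rwa [sub_add_cancel]), sub_add_cancel]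
  ext v
  simp only [genJ, gaugeDualityMap, Set.mem_ofPred_eq,
    rpow_div_sub_one_eq_rpow_iff (norm_nonneg u) (norm_nonneg v) hα₀ hα.ne']
  refine and_congr_left fun hv ↦ ?_
  rw [hv, hmul]

theorem sameRay_of_apply_eq_mul_norm {E F : Type*} [NormedAddCommGroup E] [NormedSpace ℝ E]
    [StrictConvexSpace ℝ E] [FunLike F E ℝ] [AddMonoidHomClass F E ℝ] {f : F} {c : ℝ} (hc : 0 < c)
    (hf : ∀ z, f z ≤ c * ‖z‖) {x y : E} (hx : f x = c * ‖x‖) (hy : f y = c * ‖y‖) :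
    SameRay ℝ x y := by
  rw [sameRay_iff_norm_add]
  refine (norm_add_le x y).antisymm (le_of_mul_le_mul_left ?_ hc)
  calc
    c * (‖x‖ + ‖y‖) = f (x + y) := by rw [map_add, hx, hy, mul_add]
    _ ≤ c * ‖x + y‖ := hf (x + y)

section Seminormed

variable {V : Type*} [SeminormedAddCommGroup V] [NormedSpace ℝ V] {φ : ℝ → ℝ} {u₁ u₂ : V}
  {v₁ v₂ : StrongDual ℝ V}

theorem apply_le_norm_mul_norm (v : StrongDual ℝ V) (u : V) : v u ≤ ‖v‖ * ‖u‖ :=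
  (Real.le_norm_self (v u)).trans (v.le_opNorm u)

theorem sub_apply_sub_eq_of_apply_eq_norm_mul_norm (h₁ : v₁ u₁ = ‖v₁‖ * ‖u₁‖)
    (h₂ : v₂ u₂ = ‖v₂‖ * ‖u₂‖) :
    (v₁ - v₂) (u₁ - u₂) =
      (‖v₁‖ - ‖v₂‖) * (‖u₁‖ - ‖u₂‖) + (‖v₁‖ * ‖u₂‖ - v₁ u₂) + (‖v₂‖ * ‖u₁‖ - v₂ u₁) := by
  simp only [sub_apply, map_sub, h₁, h₂]
  ring

namespace gaugeDualityMap

theorem norm_sub_mul_norm_sub_nonneg (hφ : MonotoneOn φ (Set.Ici 0))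
    (h₁ : v₁ ∈ gaugeDualityMap φ u₁) (h₂ : v₂ ∈ gaugeDualityMap φ u₂) :
    0 ≤ (‖v₁‖ - ‖v₂‖) * (‖u₁‖ - ‖u₂‖) := by
  rw [h₁.2, h₂.2]
  exact monovaryOn_iff_forall_mul_nonneg.mp (monovaryOn_id_iff.mpr hφ)
    (norm_nonneg u₂) (norm_nonneg u₁)

theorem cross_apply_eq_norm_mul_norm (hφ : MonotoneOn φ (Set.Ici 0))
    (h₁ : v₁ ∈ gaugeDualityMap φ u₁) (h₂ : v₂ ∈ gaugeDualityMap φ u₂)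
    (h : (v₁ - v₂) (u₁ - u₂) ≤ 0) :
    v₁ u₂ = ‖v₁‖ * ‖u₂‖ ∧ v₂ u₁ = ‖v₂‖ * ‖u₁‖ := by
  rw [sub_apply_sub_eq_of_apply_eq_norm_mul_norm h₁.1 h₂.1] at h
  have hprod := norm_sub_mul_norm_sub_nonneg hφ h₁ h₂
  have h₁₂ := apply_le_norm_mul_norm v₁ u₂
  have h₂₁ := apply_le_norm_mul_norm v₂ u₁
  constructor <;> linarith

theorem norm_eq_of_sub_apply_sub_nonpos (hφ : StrictMonoOn φ (Set.Ici 0))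
    (h₁ : v₁ ∈ gaugeDualityMap φ u₁) (h₂ : v₂ ∈ gaugeDualityMap φ u₂)
    (h : (v₁ - v₂) (u₁ - u₂) ≤ 0) : ‖u₁‖ = ‖u₂‖ := by
  rw [sub_apply_sub_eq_of_apply_eq_norm_mul_norm h₁.1 h₂.1] at h
  have hprod : (‖v₁‖ - ‖v₂‖) * (‖u₁‖ - ‖u₂‖) = 0 := by
    refine le_antisymm ?_ (norm_sub_mul_norm_sub_nonneg hφ.monotoneOn h₁ h₂)
    linarith [apply_le_norm_mul_norm v₁ u₂, apply_le_norm_mul_norm v₂ u₁]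
  rcases mul_eq_zero.mp hprod with hv | hu
  · rw [h₁.2, h₂.2] at hv
    exact hφ.injOn (norm_nonneg u₁) (norm_nonneg u₂) (sub_eq_zero.mp hv)
  · exact sub_eq_zero.mp hu

end gaugeDualityMap

end Seminormed

section Normed

variable {V : Type*} [NormedAddCommGroup V] [NormedSpace ℝ V] {φ : ℝ → ℝ} {u₁ u₂ : V}
  {v₁ v₂ : StrongDual ℝ V}

namespace gaugeDualityMap

theorem vector_eq_of_sub_apply_sub_nonpos [StrictConvexSpace ℝ V]
    (hφ : StrictMonoOn φ (Set.Ici 0)) (hφ₀ : φ 0 = 0) (h₁ : v₁ ∈ gaugeDualityMap φ u₁)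
    (h₂ : v₂ ∈ gaugeDualityMap φ u₂) (h : (v₁ - v₂) (u₁ - u₂) ≤ 0) : u₁ = u₂ := by
  have hu := norm_eq_of_sub_apply_sub_nonpos hφ h₁ h₂ h
  rcases (norm_nonneg u₁).eq_or_lt' with hzero | hpos
  · rw [norm_eq_zero.mp hzero, norm_eq_zero.mp (hu.symm.trans hzero)]
  · have hv₁ : 0 < ‖v₁‖ := by
      rw [h₁.2, ← hφ₀]
      exact hφ Set.self_mem_Ici hpos.le hpos
    obtain ⟨h₁₂, -⟩ := cross_apply_eq_norm_mul_norm hφ.monotoneOn h₁ h₂ h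
    exact (sameRay_of_apply_eq_mul_norm hv₁ (apply_le_norm_mul_norm v₁) h₁.1 h₁₂).eq_of_norm_eq hu

theorem functional_eq_of_sub_apply_sub_nonpos [StrictConvexSpace ℝ (StrongDual ℝ V)]
    (hφ : StrictMonoOn φ (Set.Ici 0)) (hφ₀ : φ 0 = 0) (h₁ : v₁ ∈ gaugeDualityMap φ u₁)
    (h₂ : v₂ ∈ gaugeDualityMap φ u₂) (h : (v₁ - v₂) (u₁ - u₂) ≤ 0) : v₁ = v₂ := by
  have hu := norm_eq_of_sub_apply_sub_nonpos hφ h₁ h₂ h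
  have hv : ‖v₁‖ = ‖v₂‖ := by rw [h₁.2, h₂.2, hu]
  rcases (norm_nonneg u₁).eq_or_lt with hzero | hpos
  · have hv₁ : ‖v₁‖ = 0 := by rw [h₁.2, ← hzero, hφ₀]
    rw [norm_eq_zero.mp hv₁, norm_eq_zero.mp (hv.symm.trans hv₁)]
  · obtain ⟨-, h₂₁⟩ := cross_apply_eq_norm_mul_norm hφ.monotoneOn h₁ h₂ h
    refine (sameRay_of_apply_eq_mul_norm (f := inclusionInDoubleDual ℝ V u₁) hpos
      (fun w ↦ ?_) ?_ ?_).eq_of_norm_eq hv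
    · simpa only [dual_def, mul_comm] using apply_le_norm_mul_norm w u₁
    · simpa only [dual_def, mul_comm] using h₁.1
    · simpa only [dual_def, mul_comm] using h₂₁

end gaugeDualityMap

theorem statement5_general (hφ : StrictMonoOn φ (Set.Ici 0)) (hφ₀ : φ 0 = 0)
    (h₁ : v₁ ∈ gaugeDualityMap φ u₁) (h₂ : v₂ ∈ gaugeDualityMap φ u₂) :
    ((v₁ - v₂) (u₁ - u₂) ≤ 0 →
      (StrictConvexSpace ℝ V → u₁ = u₂) ∧ (StrictConvexSpace ℝ (StrongDual ℝ V) → v₁ = v₂)) ∧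
      (StrictConvexSpace ℝ V → u₁ ≠ u₂ → 0 < (v₁ - v₂) (u₁ - u₂)) := by
  refine ⟨fun h ↦ ⟨fun _ ↦ ?_, fun _ ↦ ?_⟩, fun _ hne ↦ ?_⟩
  · exact gaugeDualityMap.vector_eq_of_sub_apply_sub_nonpos hφ hφ₀ h₁ h₂ h
  · exact gaugeDualityMap.functional_eq_of_sub_apply_sub_nonpos hφ hφ₀ h₁ h₂ h
  · contrapose! hne
    exact gaugeDualityMap.vector_eq_of_sub_apply_sub_nonpos hφ hφ₀ h₁ h₂ hne

end Normed

/-- if both the space and its dual are strictly convex then the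
generalized duality mapping is strictly monotone. -/
theorem statement5 (α : ℝ) (hα : 1 < α) (V : Type*) [NormedAddCommGroup V]
    [NormedSpace ℝ V] [StrictConvexSpace ℝ V] [StrictConvexSpace ℝ (StrongDual ℝ V)]
    (u₁ u₂ : V) (v₁ v₂ : StrongDual ℝ V)
    (h₁ : v₁ ∈ genJ α V u₁) (h₂ : v₂ ∈ genJ α V u₂) :
    ((v₁ - v₂) (u₁ - u₂) ≤ 0 → u₁ = u₂ ∧ v₁ = v₂) ∧
      (u₁ ≠ u₂ → 0 < (v₁ - v₂) (u₁ - u₂)) := by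
  rw [genJ_eq_gaugeDualityMap hα] at h₁ h₂
  have hφ := Real.strictMonoOn_rpow_Ici_of_exponent_pos (sub_pos.mpr hα)
  have hφ₀ := Real.zero_rpow (sub_ne_zero.mpr hα.ne')
  obtain ⟨heq, hpos⟩ := statement5_general hφ hφ₀ h₁ h₂
  exact ⟨fun h ↦ ⟨(heq h).1 inferInstance, (heq h).2 inferInstance⟩, hpos inferInstance⟩
end

section
/- Let α > 1 and let V be a strictly convex real normed space. Then the inverse duality mapping J^{-1} is single-valued: if u1, u2 ∈ V and v ∈ V* satisfy v ∈ J(u1) and v ∈ J(u2), then u1 = u2. -/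
/-!
A functional `v ∈ J(u)` attains its norm at `u`, and `‖v‖ = ‖u‖ ^ (α - 1)` determines `‖u‖`.
If `v ≠ 0` attains its norm at both `u₁` and `u₂`, evaluating it at `u₁ + u₂` forces equality in
the triangle inequality. In a strictly convex space, vectors of equal norm with this property
coincide.
-/

open NormedSpace Filter Topology

theorem norm_add_eq_of_apply_eq_opNorm_mul_norm {𝕜 E : Type*} [RCLike 𝕜]
    [SeminormedAddCommGroup E] [NormedSpace 𝕜 E] {f : StrongDual 𝕜 E} (hf : ‖f‖ ≠ 0) {x y : E}
    (hx : f x = (‖f‖ * ‖x‖ : ℝ)) (hy : f y = (‖f‖ * ‖y‖ : ℝ)) : ‖x + y‖ = ‖x‖ + ‖y‖ := by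
  refine le_antisymm (norm_add_le x y) (le_of_mul_le_mul_left ?_ ((norm_nonneg f).lt_of_ne' hf))
  calc
    ‖f‖ * (‖x‖ + ‖y‖) = ‖f (x + y)‖ := by
      rw [map_add, hx, hy, ← RCLike.ofReal_add, ← mul_add, RCLike.norm_of_nonneg (by positivity)]
    _ ≤ ‖f‖ * ‖x + y‖ := f.le_opNorm (x + y)

section DualityMapping

variable {α : ℝ} {V : Type*} [NormedAddCommGroup V] [NormedSpace ℝ V]

-- At `u = 0` this relies on `0 ^ x = 0` for negative exponents `x` as well.
theorem mem_genJ_iff_s6 (hα₀ : α ≠ 0) (hα₁ : α ≠ 1) {u : V} {v : StrongDual ℝ V} :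
    v ∈ genJ α V u ↔ v u = ‖v‖ * ‖u‖ ∧ ‖v‖ = ‖u‖ ^ (α - 1) := by
  have hα : α - 1 ≠ 0 := sub_ne_zero.mpr hα₁
  have norm_iff : ‖v‖ ^ (α / (α - 1)) = ‖u‖ ^ α ↔ ‖v‖ = ‖u‖ ^ (α - 1) := by
    rw [← Real.rpow_left_inj (norm_nonneg v) (by positivity) (div_ne_zero hα₀ hα),
      ← Real.rpow_mul (norm_nonneg u), mul_div_cancel₀ α hα]
  have rpow_eq : ‖u‖ ^ α = ‖u‖ ^ (α - 1) * ‖u‖ := by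
    rw [← Real.rpow_add_one' (norm_nonneg u) (by simpa using hα₀), sub_add_cancel]
  rw [genJ, Set.mem_ofPred_eq, norm_iff, rpow_eq]
  exact and_congr_left fun hv => by rw [hv]

theorem statement6_general [StrictConvexSpace ℝ V] (hα₀ : α ≠ 0) (hα₁ : α ≠ 1) {u₁ u₂ : V}
    {v : StrongDual ℝ V} (h₁ : v ∈ genJ α V u₁) (h₂ : v ∈ genJ α V u₂) : u₁ = u₂ := by
  have hα : α - 1 ≠ 0 := sub_ne_zero.mpr hα₁
  obtain ⟨attains₁, norm₁⟩ := (mem_genJ_iff_s6 hα₀ hα₁).mp h₁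
  obtain ⟨attains₂, norm₂⟩ := (mem_genJ_iff_s6 hα₀ hα₁).mp h₂
  have norm_eq : ‖u₁‖ = ‖u₂‖ :=
    (Real.rpow_left_inj (norm_nonneg u₁) (norm_nonneg u₂) hα).mp (norm₁.symm.trans norm₂)
  rcases eq_or_ne v 0 with rfl | hv
  · have hu₁ : ‖u₁‖ = 0 :=
      (Real.rpow_eq_zero (norm_nonneg u₁) hα).mp (norm₁.symm.trans norm_zero)
    rw [norm_eq_zero.mp hu₁, norm_eq_zero.mp (norm_eq.symm.trans hu₁)]
  · exact eq_of_norm_eq_of_norm_add_eq norm_eq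
      (norm_add_eq_of_apply_eq_opNorm_mul_norm (norm_ne_zero_iff.mpr hv) attains₁ attains₂)

end DualityMapping

/-- if the space is strictly convex then the inverse duality mapping is
single-valued. -/
theorem statement6 (α : ℝ) (hα : 1 < α) (V : Type*) [NormedAddCommGroup V]
    [NormedSpace ℝ V] [StrictConvexSpace ℝ V]
    (u₁ u₂ : V) (v : StrongDual ℝ V)
    (h₁ : v ∈ genJ α V u₁) (h₂ : v ∈ genJ α V u₂) : u₁ = u₂ :=
  statement6_general (zero_lt_one.trans hα).ne' hα.ne' h₁ h₂
end

section
/- Let α > 1, let V be a reflexive real Banach space such that both V and V* are uniformly convex, and let A : V → Set V* be a maximal-monotone multivalued operator. Let x ∈ V with A(x) ≠ ∅. Then: (a) A(x) contains a unique element A^0(x) of minimal V*-norm; and (b) for any assignment λ ↦ x_λ of solutions of the resolvent equation 0 ∈ J(x_λ − x) + λ A(x_λ), the generalized Yosida approximations A_λ(x) := λ^{-1} j(x − x_λ) converge strongly in V* to A^0(x) as λ → 0⁺. -/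
open NormedSpace Filter Topology

/-!
Maximality identifies `A x` with an intersection of weak-* closed half-spaces, so it is convex and
weak-* closed: Banach–Alaoglu gives an element of least norm and strict convexity its uniqueness.

Put `y_λ := λ⁻¹ j (x - x_λ) ∈ A x_λ`. Since `λ y_λ ∈ J (x - x_λ)`, monotonicity against any
`v ∈ A x` gives `‖y_λ‖ ≤ ‖v‖`, and then `‖x - x_λ‖ ^ (α - 1) = λ ‖y_λ‖ → 0`. Every weak-* cluster
point of `y_λ` therefore lies in `A x` and has norm at most `‖A⁰ x‖`, so it is `A⁰ x`. Hence
`y_λ → A⁰ x` weakly-*, and uniform convexity of the dual upgrades this to norm convergence.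
-/

/-- `v` is an element of least norm of `S`. For `S = A x` in the dual space this is the minimal
section `A⁰(x)`. -/
def IsMinNorm {E : Type*} [Norm E] (S : Set E) (v : E) : Prop :=
  v ∈ S ∧ ∀ z ∈ S, ‖v‖ ≤ ‖z‖

theorem IsMinNorm.eq_of_convex {E : Type*} [NormedAddCommGroup E] [NormedSpace ℝ E]
    [StrictConvexSpace ℝ E] {S : Set E} (hS : Convex ℝ S) {v w : E} (hv : IsMinNorm S v)
    (hw : IsMinNorm S w) : v = w := by
  by_contra hne
  have hmid : (1 / 2 : ℝ) • v + (1 / 2 : ℝ) • w ∈ S :=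
    hS hv.1 hw.1 one_half_pos.le one_half_pos.le (add_halves 1)
  exact (hv.2 _ hmid).not_gt <|
    norm_combo_lt_of_ne le_rfl (hw.2 v hv.1) hne one_half_pos one_half_pos (add_halves 1)

section WeakStar

variable {𝕜 E : Type*} [NontriviallyNormedField 𝕜] [SeminormedAddCommGroup E] [NormedSpace 𝕜 E]

theorem lowerSemicontinuous_norm_toStrongDual :
    LowerSemicontinuous fun f : WeakDual 𝕜 E => ‖WeakDual.toStrongDual f‖ := by
  refine lowerSemicontinuous_iff_isClosed_preimage.2 fun r => ?_
  convert WeakDual.isClosed_closedBall (0 : StrongDual 𝕜 E) r using 1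
  ext f
  simp only [Set.mem_preimage, Set.mem_Iic, mem_closedBall_zero_iff]

theorem exists_isMinNorm_of_isClosed_weakDual [ProperSpace 𝕜] {S : Set (StrongDual 𝕜 E)}
    (hS : IsClosed (WeakDual.toStrongDual ⁻¹' S)) (hne : S.Nonempty) : ∃ v, IsMinNorm S v := by
  obtain ⟨z, hz⟩ := hne
  set K : Set (WeakDual 𝕜 E) :=
    WeakDual.toStrongDual ⁻¹' S ∩ WeakDual.toStrongDual ⁻¹' Metric.closedBall 0 ‖z‖
  have hcompact : IsCompact K := (WeakDual.isCompact_closedBall 0 ‖z‖).inter_left hS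
  have hzK : StrongDual.toWeakDual z ∈ K := ⟨hz, mem_closedBall_zero_iff.2 le_rfl⟩
  obtain ⟨v, ⟨hvS, hvz⟩, hvmin⟩ :=
    (lowerSemicontinuous_norm_toStrongDual.lowerSemicontinuousOn K).exists_isMinOn
      ⟨_, hzK⟩ hcompact
  refine ⟨WeakDual.toStrongDual v, hvS, fun w hw => ?_⟩
  rcases le_total ‖w‖ ‖z‖ with hwz | hzw
  · exact isMinOn_iff.1 hvmin (StrongDual.toWeakDual w) ⟨hw, mem_closedBall_zero_iff.2 hwz⟩
  · exact (mem_closedBall_zero_iff.1 hvz).trans hzw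

theorem tendsto_apply_of_tendsto_toWeakDual {ι : Type*} {l : Filter ι} {f : ι → StrongDual 𝕜 E}
    {f₀ : StrongDual 𝕜 E} {a : ι → E} {a₀ : E} {R : ℝ}
    (hf : Tendsto (fun i => StrongDual.toWeakDual (f i)) l (𝓝 (StrongDual.toWeakDual f₀)))
    (hbound : ∀ᶠ i in l, ‖f i‖ ≤ R) (ha : Tendsto a l (𝓝 a₀)) :
    Tendsto (fun i => f i (a i)) l (𝓝 (f₀ a₀)) := by
  have hfixed : Tendsto (fun i => f i a₀) l (𝓝 (f₀ a₀)) :=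
    ((WeakDual.eval_continuous a₀).tendsto _).comp hf
  have herror : Tendsto (fun i => f i (a i - a₀)) l (𝓝 0) := by
    have hbig : Tendsto (fun i => R * ‖a i - a₀‖) l (𝓝 0) := by
      simpa only [mul_zero] using (tendsto_iff_norm_sub_tendsto_zero.1 ha).const_mul R
    refine squeeze_zero_norm' ?_ hbig
    filter_upwards [hbound] with i hi using (f i).le_of_opNorm_le hi _
  simpa only [map_sub, add_sub_cancel, add_zero] using hfixed.add herror

/-- Weak-* convergence `f i → f₀` makes `‖f i + f₀‖` eventually almost as large as `2‖f₀‖`, which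
uniform convexity forbids as long as `f i` stays away from `f₀` inside the ball of radius `‖f₀‖`. -/
theorem tendsto_of_tendsto_toWeakDual_of_norm_le {V ι : Type*} [SeminormedAddCommGroup V]
    [NormedSpace ℝ V] [UniformConvexSpace (StrongDual ℝ V)] {l : Filter ι}
    {f : ι → StrongDual ℝ V} {f₀ : StrongDual ℝ V}
    (hf : Tendsto (fun i => StrongDual.toWeakDual (f i)) l (𝓝 (StrongDual.toWeakDual f₀)))
    (hle : ∀ᶠ i in l, ‖f i‖ ≤ ‖f₀‖) : Tendsto f l (𝓝 f₀) := by
  refine Metric.tendsto_nhds.2 fun ε hε => ?_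
  obtain ⟨δ, hδ, hconvex⟩ :=
    exists_forall_closed_ball_dist_add_le_two_mul_sub (StrongDual ℝ V) hε ‖f₀‖
  have hsum : Tendsto (fun i => StrongDual.toWeakDual (f i) + StrongDual.toWeakDual f₀) l
      (𝓝 (StrongDual.toWeakDual f₀ + StrongDual.toWeakDual f₀)) := hf.add_const _
  have hlt : 2 * ‖f₀‖ - δ < ‖f₀ + f₀‖ := by
    rw [← two_smul ℝ f₀, norm_smul, Real.norm_two]
    exact sub_lt_self _ hδ
  filter_upwards [hle, hsum.eventually (lowerSemicontinuous_norm_toStrongDual _ _ hlt)]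
    with i hi hlarge
  by_contra! hfar
  exact (hconvex hi le_rfl (dist_eq_norm (f i) f₀ ▸ hfar)).not_gt hlarge

end WeakStar

section Monotone

variable {V : Type*} [NormedAddCommGroup V] [NormedSpace ℝ V] {A : V → Set (StrongDual ℝ V)}
  {x u : V} {y v : StrongDual ℝ V}

theorem MonotoneOp.norm_le_of_apply_sub_eq (hA : MonotoneOp A) (hv : v ∈ A x) (hy : y ∈ A u)
    (hxu : x ≠ u) (hpair : y (x - u) = ‖y‖ * ‖x - u‖) : ‖y‖ ≤ ‖v‖ := by
  refine le_of_mul_le_mul_right ?_ (norm_pos_iff.2 (sub_ne_zero.2 hxu))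
  calc ‖y‖ * ‖x - u‖ = y (x - u) := hpair.symm
    _ ≤ v (x - u) := by simpa only [sub_apply, sub_nonneg] using hA x u v hv y hy
    _ ≤ ‖v‖ * ‖x - u‖ := (le_abs_self _).trans (v.le_opNorm _)

theorem MaximalMonotoneOp.mem_iff (hA : MaximalMonotoneOp A) :
    y ∈ A x ↔ ∀ u, ∀ w ∈ A u, w (x - u) ≤ y (x - u) := by
  refine ⟨fun hy u w hw => by simpa only [sub_apply, sub_nonneg] using hA.1 x u y hy w hw,
    fun h => ?_⟩
  have hext : MonotoneOp fun u => {w | w ∈ A u ∨ (u = x ∧ w = y)} := by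
    rintro u₁ u₂ w₁ (h₁ | ⟨rfl, rfl⟩) w₂ (h₂ | ⟨rfl, rfl⟩)
    · exact hA.1 u₁ u₂ w₁ h₁ w₂ h₂
    · rw [← neg_sub w₂, ← neg_sub u₂, neg_apply, map_neg, neg_neg, sub_apply, sub_nonneg]
      exact h u₁ w₁ h₁
    · simpa only [sub_apply, sub_nonneg] using h u₂ w₂ h₂
    · simp only [sub_self, map_zero, le_refl]
  rw [← hA.2 _ hext (fun u w hw => Or.inl hw) x]
  exact Or.inr ⟨rfl, rfl⟩

theorem MaximalMonotoneOp.convex (hA : MaximalMonotoneOp A) (x : V) : Convex ℝ (A x) := by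
  intro y hy z hz a b ha hb hab
  refine hA.mem_iff.2 fun u w hw => ?_
  calc w (x - u) = a * w (x - u) + b * w (x - u) := by rw [← add_mul, hab, one_mul]
    _ ≤ a * y (x - u) + b * z (x - u) := by
      gcongr
      exacts [hA.mem_iff.1 hy u w hw, hA.mem_iff.1 hz u w hw]

theorem MaximalMonotoneOp.isClosed_weakDual (hA : MaximalMonotoneOp A) (x : V) :
    IsClosed (WeakDual.toStrongDual ⁻¹' A x) := by
  have hinter : WeakDual.toStrongDual ⁻¹' A x =
      ⋂ u, ⋂ w ∈ A u, {f : WeakDual ℝ V | w (x - u) ≤ f (x - u)} := by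
    ext f
    rw [Set.mem_preimage, hA.mem_iff]
    simp only [Set.mem_iInter, Set.mem_ofPred_eq, WeakDual.toStrongDual_apply]
  rw [hinter]
  exact isClosed_iInter fun u => isClosed_biInter fun w _ =>
    isClosed_le continuous_const (WeakDual.eval_continuous _)

theorem MaximalMonotoneOp.existsUnique_isMinNorm [StrictConvexSpace ℝ (StrongDual ℝ V)]
    (hA : MaximalMonotoneOp A) (hne : (A x).Nonempty) : ∃! v, IsMinNorm (A x) v :=
  existsUnique_of_exists_of_unique
    (exists_isMinNorm_of_isClosed_weakDual (hA.isClosed_weakDual x) hne)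
    fun _ _ hv hw => hv.eq_of_convex (hA.convex x) hw

theorem MaximalMonotoneOp.mem_of_tendsto {ι : Type*} {l : Filter ι} [l.NeBot]
    (hA : MaximalMonotoneOp A) {xs : ι → V} {ys : ι → StrongDual ℝ V} {R : ℝ}
    (hmem : ∀ᶠ i in l, ys i ∈ A (xs i)) (hxs : Tendsto xs l (𝓝 x))
    (hbound : ∀ᶠ i in l, ‖ys i‖ ≤ R)
    (hys : Tendsto (fun i => StrongDual.toWeakDual (ys i)) l (𝓝 (StrongDual.toWeakDual y))) :
    y ∈ A x := by
  refine hA.mem_iff.2 fun u w hw => ?_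
  have hxsu : Tendsto (fun i => xs i - u) l (𝓝 (x - u)) := hxs.sub_const u
  refine le_of_tendsto_of_tendsto ((w.continuous.tendsto _).comp hxsu)
    (tendsto_apply_of_tendsto_toWeakDual hys hbound hxsu) ?_
  filter_upwards [hmem] with i hi using hA.mem_iff.1 hi u w hw

theorem MaximalMonotoneOp.tendsto_isMinNorm [UniformConvexSpace (StrongDual ℝ V)] {ι : Type*}
    {l : Filter ι} (hA : MaximalMonotoneOp A) (hv : IsMinNorm (A x) v) {xs : ι → V}
    {ys : ι → StrongDual ℝ V} (hmem : ∀ᶠ i in l, ys i ∈ A (xs i)) (hxs : Tendsto xs l (𝓝 x))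
    (hle : ∀ᶠ i in l, ‖ys i‖ ≤ ‖v‖) : Tendsto ys l (𝓝 v) := by
  refine tendsto_of_tendsto_toWeakDual_of_norm_le ?_ hle
  have hball : ∀ᶠ i in l, StrongDual.toWeakDual (ys i) ∈
      WeakDual.toStrongDual ⁻¹' Metric.closedBall (0 : StrongDual ℝ V) ‖v‖ := by
    filter_upwards [hle] with i hi using mem_closedBall_zero_iff.2 hi
  refine (WeakDual.isCompact_closedBall 0 ‖v‖).tendsto_nhds_of_unique_mapClusterPt hball
    fun z hz hcluster => ?_
  obtain ⟨U, hUl, hU⟩ := mapClusterPt_iff_ultrafilter.1 hcluster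
  have hzA : WeakDual.toStrongDual z ∈ A x :=
    hA.mem_of_tendsto (hmem.filter_mono hUl) (hxs.mono_left hUl) (hle.filter_mono hUl) hU
  have hzmin : IsMinNorm (A x) (WeakDual.toStrongDual z) :=
    ⟨hzA, fun w hw => (mem_closedBall_zero_iff.1 hz).trans (hv.2 w hw)⟩
  exact hzmin.eq_of_convex (hA.convex x) hv

end Monotone

section DualityMapping

variable {V : Type*} [NormedAddCommGroup V] [NormedSpace ℝ V] {α : ℝ} {u : V}
  {v w : StrongDual ℝ V}

theorem genJ.norm_eq (hα : 1 < α) (hv : v ∈ genJ α V u) : ‖v‖ = ‖u‖ ^ (α - 1) := by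
  have hα₀ : α ≠ 0 := by linarith
  have hα₁ : α - 1 ≠ 0 := by linarith
  calc ‖v‖ = (‖v‖ ^ (α / (α - 1))) ^ ((α - 1) / α) := by
        rw [← inv_div α, Real.rpow_rpow_inv (norm_nonneg v) (div_ne_zero hα₀ hα₁)]
    _ = ‖u‖ ^ (α - 1) := by
        rw [hv.2, ← Real.rpow_mul (norm_nonneg u), mul_div_cancel₀ _ hα₀]

theorem genJ.apply_eq (hα : 1 < α) (hv : v ∈ genJ α V u) : v u = ‖v‖ * ‖u‖ := by
  rcases eq_or_ne u 0 with rfl | hu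
  · rw [map_zero, norm_zero, mul_zero]
  · rw [hv.1, genJ.norm_eq hα hv, ← Real.rpow_add_one (norm_ne_zero_iff.2 hu), sub_add_cancel]

theorem genJ.neg_mem (hv : v ∈ genJ α V u) : -v ∈ genJ α V (-u) := by
  simpa only [genJ, Set.mem_ofPred_eq, neg_apply, map_neg, neg_neg, norm_neg] using hv

theorem genJ.subsingleton [StrictConvexSpace ℝ (StrongDual ℝ V)] (hα : 1 < α) (u : V) :
    (genJ α V u).Subsingleton := by
  intro v hv w hw
  rcases eq_or_ne u 0 with rfl | hu
  · have hzero {z : StrongDual ℝ V} (hz : z ∈ genJ α V 0) : z = 0 := by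
      rw [← norm_eq_zero, genJ.norm_eq hα hz, norm_zero, Real.zero_rpow (by linarith)]
    rw [hzero hv, hzero hw]
  · have hnorm : ‖v‖ = ‖w‖ := (genJ.norm_eq hα hv).trans (genJ.norm_eq hα hw).symm
    refine eq_of_norm_eq_of_norm_add_eq hnorm (le_antisymm (norm_add_le v w) ?_)
    refine le_of_mul_le_mul_right ?_ (norm_pos_iff.2 hu)
    calc (‖v‖ + ‖w‖) * ‖u‖ = (v + w) u := by
          rw [add_apply, genJ.apply_eq hα hv, genJ.apply_eq hα hw, add_mul]
      _ ≤ ‖v + w‖ * ‖u‖ := (le_abs_self _).trans ((v + w).le_opNorm u)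

end DualityMapping

section Yosida

variable {V : Type*} [NormedAddCommGroup V] [NormedSpace ℝ V] {A : V → Set (StrongDual ℝ V)}
  {α lam : ℝ} {x u : V} {y v : StrongDual ℝ V}

/-- `y` is a generalized Yosida approximation `A_λ(x)` with resolvent point `u = x_λ`. The
equation `0 ∈ J(u - x) + λ A(u)` and the formula `y = λ⁻¹ j(x - u)` are combined into `y ∈ A u` and
`λ y ∈ J(x - u)`, using that `J` is odd and allowing it to be multivalued. -/
structure IsYosidaApprox (α : ℝ) (A : V → Set (StrongDual ℝ V)) (lam : ℝ) (x u : V)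
    (y : StrongDual ℝ V) : Prop where
  mem : y ∈ A u
  smul_mem : lam • y ∈ genJ α V (x - u)

namespace IsYosidaApprox

theorem norm_sub_rpow (hy : IsYosidaApprox α A lam x u y) (hα : 1 < α) (hlam : 0 < lam) :
    ‖x - u‖ ^ (α - 1) = lam * ‖y‖ := by
  rw [← genJ.norm_eq hα hy.smul_mem, norm_smul, Real.norm_of_nonneg hlam.le]

theorem norm_le (hy : IsYosidaApprox α A lam x u y) (hα : 1 < α) (hlam : 0 < lam)
    (hA : MonotoneOp A) (hv : v ∈ A x) : ‖y‖ ≤ ‖v‖ := by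
  rcases eq_or_ne x u with rfl | hxu
  · have hzero := hy.norm_sub_rpow hα hlam
    rw [sub_self, norm_zero, Real.zero_rpow (by linarith), zero_eq_mul] at hzero
    exact (hzero.resolve_left hlam.ne').le.trans (norm_nonneg v)
  · refine hA.norm_le_of_apply_sub_eq hv hy.mem hxu (mul_left_cancel₀ hlam.ne' ?_)
    have hpair := genJ.apply_eq hα hy.smul_mem
    rwa [smul_apply, smul_eq_mul, norm_smul, Real.norm_of_nonneg hlam.le, mul_assoc] at hpair

variable {ι : Type*} {l : Filter ι} {lams : ι → ℝ} {xs : ι → V} {ys : ι → StrongDual ℝ V}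

theorem tendsto_resolvent (hα : 1 < α) (hlams : Tendsto lams l (𝓝[>] 0))
    (hys : ∀ᶠ i in l, IsYosidaApprox α A (lams i) x (xs i) (ys i)) (hA : MonotoneOp A)
    (hv : v ∈ A x) : Tendsto xs l (𝓝 x) := by
  have hα₁ : 0 < α - 1 := sub_pos.2 hα
  obtain ⟨hlim, hpos⟩ := tendsto_nhdsWithin_iff.1 hlams
  have hbound : ∀ᶠ i in l, ‖x - xs i‖ ≤ (lams i * ‖v‖) ^ (α - 1)⁻¹ := by
    filter_upwards [hpos, hys] with i hi hy
    rw [Real.le_rpow_inv_iff_of_pos (norm_nonneg _) (mul_nonneg (le_of_lt hi) (norm_nonneg v)) hα₁,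
      hy.norm_sub_rpow hα hi]
    exact mul_le_mul_of_nonneg_left (hy.norm_le hα hi hA hv) (le_of_lt hi)
  have hsmall : Tendsto (fun i => (lams i * ‖v‖) ^ (α - 1)⁻¹) l (𝓝 0) := by
    simpa only [zero_mul, Real.zero_rpow (inv_ne_zero hα₁.ne')] using
      (hlim.mul_const ‖v‖).rpow_const (Or.inr (inv_nonneg.2 hα₁.le))
  refine tendsto_iff_norm_sub_tendsto_zero.2 ?_
  simp only [norm_sub_rev _ x]
  exact squeeze_zero' (Eventually.of_forall fun i => norm_nonneg _) hbound hsmall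

theorem tendsto_isMinNorm [UniformConvexSpace (StrongDual ℝ V)] (hα : 1 < α)
    (hlams : Tendsto lams l (𝓝[>] 0))
    (hys : ∀ᶠ i in l, IsYosidaApprox α A (lams i) x (xs i) (ys i)) (hA : MaximalMonotoneOp A)
    (hv : IsMinNorm (A x) v) : Tendsto ys l (𝓝 v) := by
  refine hA.tendsto_isMinNorm hv (hys.mono fun i hy => hy.mem)
    (tendsto_resolvent hα hlams hys hA.1 hv.1) ?_
  filter_upwards [(tendsto_nhdsWithin_iff.1 hlams).2, hys] with i hi hy
    using hy.norm_le hα hi hA.1 hv.1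

end IsYosidaApprox

end Yosida

theorem statement11_general {α : ℝ} (hα : 1 < α) {V : Type*} [NormedAddCommGroup V]
    [NormedSpace ℝ V] [UniformConvexSpace (StrongDual ℝ V)]
    {j : V → StrongDual ℝ V} (hj : ∀ u : V, j u ∈ genJ α V u)
    {A : V → Set (StrongDual ℝ V)} (hA : MaximalMonotoneOp A)
    {x : V} (hAx : (A x).Nonempty) :
    (∃! v : StrongDual ℝ V, IsMinNorm (A x) v) ∧
      ∀ v : StrongDual ℝ V, IsMinNorm (A x) v → ∀ xsel : ℝ → V,
        (∀ lam : ℝ, 0 < lam → (-lam⁻¹) • j (xsel lam - x) ∈ A (xsel lam)) →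
        Tendsto (fun lam : ℝ => lam⁻¹ • j (x - xsel lam)) (𝓝[>] 0) (𝓝 v) := by
  refine ⟨hA.existsUnique_isMinNorm hAx, fun v hv xsel hsel => ?_⟩
  have hodd (u : V) : j (-u) = -j u :=
    genJ.subsingleton hα (-u) (hj (-u)) (genJ.neg_mem (hj u))
  have hyosida : ∀ᶠ lam in 𝓝[>] (0 : ℝ),
      IsYosidaApprox α A lam x (xsel lam) (lam⁻¹ • j (x - xsel lam)) := by
    filter_upwards [self_mem_nhdsWithin] with lam hlam
    constructor
    · rw [← neg_sub, hodd, smul_neg, ← neg_smul]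
      exact hsel lam hlam
    · rw [smul_inv_smul₀ (ne_of_gt hlam)]
      exact hj _
  exact IsYosidaApprox.tendsto_isMinNorm hα tendsto_id hyosida hA hv

/-- (a) a maximal monotone operator on a reflexive Banach space with
uniformly convex space and dual admits a unique minimal section at each point of
its domain; (b) the generalized Yosida approximations converge strongly in the
dual to the minimal section as the parameter tends to zero from the right. -/
theorem statement11 (α : ℝ) (hα : 1 < α) (V : Type*) [NormedAddCommGroup V]
    [NormedSpace ℝ V] [CompleteSpace V] [UniformConvexSpace V]
    [UniformConvexSpace (StrongDual ℝ V)]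
    (hrefl : Function.Surjective (inclusionInDoubleDual ℝ V))
    (j : V → StrongDual ℝ V) (hj : ∀ u : V, j u ∈ genJ α V u)
    (A : V → Set (StrongDual ℝ V)) (hA : MaximalMonotoneOp A)
    (x : V) (hAx : (A x).Nonempty) :
    (∃! v : StrongDual ℝ V, v ∈ A x ∧ ∀ z ∈ A x, ‖v‖ ≤ ‖z‖) ∧
      (∀ v : StrongDual ℝ V, (v ∈ A x ∧ ∀ z ∈ A x, ‖v‖ ≤ ‖z‖) →
        ∀ xsel : ℝ → V,
          (∀ lam : ℝ, 0 < lam → (-lam⁻¹) • j (xsel lam - x) ∈ A (xsel lam)) →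
          Tendsto (fun lam : ℝ => lam⁻¹ • j (x - xsel lam))
            (𝓝[>] (0 : ℝ)) (𝓝 v)) := by
  exact statement11_general hα hj hA hAx
end
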